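/- Let a≥1 and b≥1 be integers and G=G(a,b). For all 1≤i≤2a and 1≤j≤b, the Lin–Lu–Yau curvature satisfies κ_LLY(u_i,v_j)=1. -/

import Mathlib

open scoped Classical
open Finset

noncomputable section

/-- The degree of a vertex `x` in the graph `G`. -/
def deg {V : Type*} [Fintype V] (G : SimpleGraph V) (x : V) : ℕ :=
  (Finset.univ.filter (fun y => G.Adj x y)).card

/-- The diameter of `G`: the maximum of the combinatorial distance over all pairs of vertices. -/
def diam {V : Type*} [Fintype V] (G : SimpleGraph V) : ℕ :=
  Finset.univ.sup (fun xy : V × V => G.dist xy.1 xy.2)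

/-- The probability measure `μ_x^p` of the lazy simple random walk at `x` with idleness `p`. -/
def mu {V : Type*} [Fintype V] (G : SimpleGraph V) (p : ℝ) (x : V) : V → ℝ :=
  fun z => if z = x then p else if G.Adj x z then (1 - p) / (deg G x : ℝ) else 0

/-- The Wasserstein distance `W₁(μ₁, μ₂)` with respect to the combinatorial distance of `G`:
the infimum of the total transport cost over all transport plans from `μ₁` to `μ₂`. -/
def W1 {V : Type*} [Fintype V] (G : SimpleGraph V) (μ₁ μ₂ : V → ℝ) : ℝ :=
  sInf {c : ℝ | ∃ π : V → V → ℝ,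
    (∀ x y, 0 ≤ π x y ∧ π x y ≤ 1) ∧
    (∀ x, ∑ y, π x y = μ₁ x) ∧
    (∀ y, ∑ x, π x y = μ₂ y) ∧
    c = ∑ x, ∑ y, (G.dist x y : ℝ) * π x y}

/-- The `p`-Ollivier-Ricci curvature `κ_p(x,y) = 1 - W₁(μ_x^p, μ_y^p)`. -/
def kappa {V : Type*} [Fintype V] (G : SimpleGraph V) (p : ℝ) (x y : V) : ℝ :=
  1 - W1 G (mu G p x) (mu G p y)

/-- The Lin-Lu-Yau curvature `κ_LLY(x,y) = lim_{p→1} κ_p(x,y)/(1-p)`. -/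
def kappaLLY {V : Type*} [Fintype V] (G : SimpleGraph V) (x y : V) : ℝ :=
  Filter.limUnder (nhdsWithin 1 (Set.Iio 1)) (fun p => kappa G p x y / (1 - p))

/-- `G` is Bonnet-Myers sharp if the infimum of `κ_LLY` over the edges equals `2/diam(G)`. -/
def BMSharp {V : Type*} [Fintype V] (G : SimpleGraph V) : Prop :=
  sInf {r : ℝ | ∃ x y, G.Adj x y ∧ r = kappaLLY G x y} = 2 / (diam G : ℝ)

/-- `G` is obtained from the complete graph on its vertex set by deleting a matching
(a set of pairwise disjoint edges, encoded as a symmetric irreflexive relation in which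
every vertex has at most one partner). -/
def IsMatchingDeletionOfComplete {V : Type*} (G : SimpleGraph V) : Prop :=
  ∃ M : V → V → Prop, Symmetric M ∧ (∀ x, ¬ M x x) ∧
    (∀ x y z, M x y → M x z → y = z) ∧
    (∀ x y, G.Adj x y ↔ x ≠ y ∧ ¬ M x y)

/-- The graph `G(a,b)` on `2a+b` vertices `u_1, …, u_{2a}, v_1, …, v_b` (encoded as
`Fin (2a+b)`, with `u_i` the index `i-1` and `v_j` the index `2a+j-1`), in which two distinct
vertices are adjacent unless they form a pair `{u_{2i-1}, u_{2i}}`, i.e. `G(a,b)` is the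
complete graph `K_{2a+b}` with a matching of size `a` deleted. -/
def Gab (a b : ℕ) : SimpleGraph (Fin (2*a+b)) where
  Adj x y := x ≠ y ∧ ¬((x : ℕ) < 2*a ∧ (y : ℕ) < 2*a ∧ (x : ℕ)/2 = (y : ℕ)/2)
  symm := by
    constructor
    intro x y h
    exact ⟨h.1.symm, fun hc => h.2 ⟨hc.2.1, hc.1, hc.2.2.symm⟩⟩
  loopless := by constructor; intro x h; exact h.1 rfl

/-- The antitree `AT(a_1, …, a_N)` on the disjoint union of sets `V_1, …, V_N` with
`|V_k| = a_k` (0-indexed here: `V_k` is `Fin (a k)` for `k : Fin N`): two distinct vertices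
are adjacent iff they lie in the same set or in consecutive sets. -/
def antitree (N : ℕ) (a : Fin N → ℕ) : SimpleGraph (Σ k : Fin N, Fin (a k)) where
  Adj x y := x ≠ y ∧
    ((x.1 : ℕ) = (y.1 : ℕ) ∨ (x.1 : ℕ) + 1 = (y.1 : ℕ) ∨ (y.1 : ℕ) + 1 = (x.1 : ℕ))
  symm := by
    constructor
    intro x y h
    refine ⟨h.1.symm, ?_⟩
    rcases h.2 with h2 | h2 | h2
    · exact Or.inl h2.symm
    · exact Or.inr (Or.inr h2)
    · exact Or.inr (Or.inl h2)
  loopless := by constructor; intro x h; exact h.1 rfl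

/-!
For an edge `x ∼ y` such that every neighbour of `x` other than `y` is adjacent to `y`, let `A` be
the closed neighbourhood of `x` without `y`, and `S` the set of neighbours of `y` that are neither
`x` nor adjacent to `x`. If every neighbour of `x` is adjacent to all of `S`, an optimal transport
from `μ_x^p` to `μ_y^p` moves the excess at `x` to `y` and spreads the excess of `A` evenly over
`S`. Its optimality is certified by the potential `1_x - 1_S`: the plan moves mass only between
vertices where the potential drops by exactly their distance. This gives
`κ_LLY(x, y) = (d_x + 1) / d_y`.

The graph `G(a, b)` is complete multipartite, so the condition holds at `u_i ∼ v_j`, and there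
`d_y = d_x + 1`, since the partner of `u_i` is the only element of `S`.
-/

lemma sub_le_dist_of_adj {V : Type*} {G : SimpleGraph V} {f : V → ℝ} (hG : G.Connected)
    (hf : ∀ z w, G.Adj z w → f z - f w ≤ 1) (z w : V) : f z - f w ≤ G.dist z w := by
  have sub_le_length : ∀ {z w : V} (q : G.Walk z w), f z - f w ≤ q.length := by
    intro z w q
    induction q with
    | nil => simp
    | cons hadj q ih =>
      rw [SimpleGraph.Walk.length_cons, Nat.cast_add_one]
      linarith [hf _ _ hadj]
  obtain ⟨q, hq⟩ := hG.exists_walk_length_eq_dist z w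
  exact hq ▸ sub_le_length q

section Coupling

variable {V : Type*} [Fintype V]

/-- `π` is a coupling (transport plan) of `μ₁` and `μ₂`. The upper bound `π ≤ 1` required in `W1` is
left out, since it follows from `μ₁ ≤ 1`. -/
structure IsCoupling (μ₁ μ₂ : V → ℝ) (π : V → V → ℝ) : Prop where
  nonneg : ∀ z w, 0 ≤ π z w
  sum_right : ∀ z, ∑ w, π z w = μ₁ z
  sum_left : ∀ w, ∑ z, π z w = μ₂ w

variable {G : SimpleGraph V} {μ₁ μ₂ f : V → ℝ} {π : V → V → ℝ}

lemma IsCoupling.le_left (h : IsCoupling μ₁ μ₂ π) (z w : V) : π z w ≤ μ₁ z :=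
  h.sum_right z ▸ single_le_sum (fun w _ => h.nonneg z w) (mem_univ w)

lemma IsCoupling.sum_sub_mul (h : IsCoupling μ₁ μ₂ π) (f : V → ℝ) :
    ∑ z, ∑ w, (f z - f w) * π z w = ∑ z, f z * μ₁ z - ∑ w, f w * μ₂ w := by
  simp only [sub_mul, sum_sub_distrib]
  congr 1
  · simp only [← mul_sum, h.sum_right]
  · rw [sum_comm]
    simp only [← mul_sum, h.sum_left]

/-- Complementary slackness: the coupling `π` and the potential `f` certify each other. -/
lemma W1_eq_of_isCoupling_of_potential (hμ₁ : ∀ z, μ₁ z ≤ 1) (hπ : IsCoupling μ₁ μ₂ π)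
    (hf : ∀ z w, f z - f w ≤ G.dist z w) (htight : ∀ z w, π z w ≠ 0 → f z - f w = G.dist z w) :
    W1 G μ₁ μ₂ = ∑ z, f z * μ₁ z - ∑ w, f w * μ₂ w := by
  refine IsLeast.csInf_eq ⟨⟨π, fun z w => ⟨hπ.nonneg z w, (hπ.le_left z w).trans (hμ₁ z)⟩,
    hπ.sum_right, hπ.sum_left, ?_⟩, ?_⟩
  · rw [← hπ.sum_sub_mul]
    refine sum_congr rfl fun z _ => sum_congr rfl fun w _ => ?_
    by_cases hzw : π z w = 0
    · simp only [hzw, mul_zero]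
    · rw [htight z w hzw]
  · rintro _ ⟨ρ, hρ, hright, hleft, rfl⟩
    have hρ' : IsCoupling μ₁ μ₂ ρ := ⟨fun z w => (hρ z w).1, hright, hleft⟩
    rw [← hρ'.sum_sub_mul]
    gcongr with z _ w _
    · exact (hρ z w).1
    · exact hf z w

end Coupling

section Curvature

variable {V : Type*} [Fintype V] {G : SimpleGraph V} {x y : V} {p : ℝ}

lemma mu_le_one (hp₀ : 0 ≤ p) (hp₁ : p ≤ 1) (z : V) : mu G p x z ≤ 1 := by
  unfold mu
  split_ifs
  · exact hp₁
  · exact (div_nat_le_self_of_nonnneg (sub_nonneg.2 hp₁) _).trans (sub_le_self 1 hp₀)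
  · exact zero_le_one

lemma kappaLLY_eq_of_eventually_kappa_eq {c : ℝ}
    (h : ∀ᶠ p in nhdsWithin (1 : ℝ) (Set.Iio 1), kappa G p x y = c * (1 - p)) :
    kappaLLY G x y = c := by
  refine (tendsto_const_nhds.congr' ?_).limUnder_eq
  filter_upwards [h, self_mem_nhdsWithin] with p hp hp₁
  rw [hp, mul_div_cancel_right₀ _ (sub_pos.2 hp₁).ne']

lemma deg_pos_of_adj (hxy : G.Adj x y) : 0 < deg G x :=
  card_pos.2 ⟨y, mem_filter.2 ⟨mem_univ y, hxy⟩⟩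

/-- The closed neighbourhood of `x` without `y`: the vertices where `μ_y^p` can keep mass of
`μ_x^p` when all neighbours of `x` lie in the closed neighbourhood of `y`. -/
def nearSet (G : SimpleGraph V) (x y : V) : Finset V :=
  {z | z ≠ y ∧ (z = x ∨ G.Adj x z)}

/-- The neighbours of `y` outside the closed neighbourhood of `x`: those charged by `μ_y^p` but not
by `μ_x^p`. -/
def farSet (G : SimpleGraph V) (x y : V) : Finset V :=
  {w | G.Adj y w ∧ w ≠ x ∧ ¬ G.Adj x w}

lemma mem_nearSet {z : V} : z ∈ nearSet G x y ↔ z ≠ y ∧ (z = x ∨ G.Adj x z) := by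
  simp [nearSet]

lemma mem_farSet {w : V} : w ∈ farSet G x y ↔ G.Adj y w ∧ w ≠ x ∧ ¬ G.Adj x w := by
  simp [farSet]

lemma card_nearSet (hxy : G.Adj x y) : #(nearSet G x y) = deg G x := by
  have nearSet_eq : nearSet G x y = insert x ((univ.filter (G.Adj x ·)).erase y) := by
    ext z
    have := hxy.ne
    simp only [mem_nearSet, mem_insert, mem_erase, mem_filter, mem_univ]
    grind
  rw [nearSet_eq, card_insert_of_notMem (by simp), card_erase_add_one (by simpa), deg]

lemma disjoint_nearSet_farSet : Disjoint (nearSet G x y) (farSet G x y) :=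
  disjoint_left.2 fun z hnear hfar => by
    rw [mem_nearSet] at hnear
    rw [mem_farSet] at hfar
    tauto

lemma mem_nearSet_or_mem_farSet_iff_adj (hxy : G.Adj x y)
    (hsub : ∀ z, G.Adj x z → z ≠ y → G.Adj y z) (z : V) :
    z ∈ nearSet G x y ∨ z ∈ farSet G x y ↔ G.Adj y z := by
  have := hsub z
  have := hxy.symm
  have := G.ne_of_adj (a := y) (b := z)
  rw [mem_nearSet, mem_farSet]
  grind

lemma deg_add_card_farSet (hxy : G.Adj x y) (hsub : ∀ z, G.Adj x z → z ≠ y → G.Adj y z) :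
    deg G x + #(farSet G x y) = deg G y := by
  rw [← card_nearSet hxy, ← card_union_of_disjoint disjoint_nearSet_farSet, deg]
  congr 1
  ext z
  simpa using mem_nearSet_or_mem_farSet_iff_adj hxy hsub z

/-- The Kantorovich potential `1_x - 1_{farSet}` for transport from `μ_x^p` to `μ_y^p`. -/
def transportPotential (G : SimpleGraph V) (x y z : V) : ℝ :=
  (if z = x then 1 else 0) - (if z ∈ farSet G x y then 1 else 0)

lemma transportPotential_sub_le_dist (hG : G.Connected) (z w : V) :
    transportPotential G x y z - transportPotential G x y w ≤ G.dist z w := by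
  refine sub_le_dist_of_adj hG (fun z w hzw => ?_) z w
  have not_far_of_eq : z = x → w ∉ farSet G x y := by
    rintro rfl hw
    exact (mem_farSet.1 hw).2.2 hzw
  unfold transportPotential
  split_ifs <;> first | linarith | tauto

lemma sum_transportPotential_mul_sub (hxy : G.Adj x y) :
    ∑ z, transportPotential G x y z * mu G p x z - ∑ w, transportPotential G x y w * mu G p y w =
      p + (1 - p) / deg G y * (#(farSet G x y) - 1) := by
  have sum_transportPotential_mul (μ : V → ℝ) :
      ∑ z, transportPotential G x y z * μ z = μ x - ∑ z ∈ farSet G x y, μ z := by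
    simp [transportPotential, sub_mul, sum_sub_distrib]
  have mu_x_far : ∀ z ∈ farSet G x y, mu G p x z = 0 := fun z hz => by
    simp [mu, (mem_farSet.1 hz).2]
  have mu_y_far : ∀ z ∈ farSet G x y, mu G p y z = (1 - p) / deg G y := fun z hz => by
    simp [mu, (mem_farSet.1 hz).1, (mem_farSet.1 hz).1.ne']
  rw [sum_transportPotential_mul, sum_transportPotential_mul, sum_congr rfl mu_x_far,
    sum_congr rfl mu_y_far]
  simp only [mu, if_true, hxy.ne, hxy.symm, if_false, sum_const_zero, sum_const, nsmul_eq_mul]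
  ring

lemma mu_left_eq_sum_ite (hxy : G.Adj x y) (z : V) :
    mu G p x z = (if z = x then p - (1 - p) / deg G x else 0) +
      (if z = y then (1 - p) / deg G x else 0) +
      (if z ∈ nearSet G x y then (1 - p) / deg G x else 0) := by
  have := hxy.ne
  simp only [mu, mem_nearSet]
  grind

lemma mu_right_eq_sum_ite (hxy : G.Adj x y) (hsub : ∀ z, G.Adj x z → z ≠ y → G.Adj y z) (w : V) :
    mu G p y w = (if w = y then p else 0) +
      (if w ∈ nearSet G x y then (1 - p) / deg G y else 0) +
      (if w ∈ farSet G x y then (1 - p) / deg G y else 0) := by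
  have near_or_far := mem_nearSet_or_mem_farSet_iff_adj hxy hsub w
  have not_both : w ∈ nearSet G x y → w ∉ farSet G x y :=
    fun h => disjoint_left.1 disjoint_nearSet_farSet h
  have ne_of_adj := G.ne_of_adj (a := y) (b := w)
  rw [mu]
  grind

/-- The transport plan from `μ_x^p` to `μ_y^p` in which `x` sends its excess `p - (1 - p) / d_x`
to `y`, `y` keeps its mass, and each vertex of `nearSet` keeps `(1 - p) / d_y` and sends equal
shares of the rest to the vertices of `farSet`. There are `d_y - d_x` of those, so each share is
`(1 - p) / (d_x d_y)`. -/
def transportPlan (G : SimpleGraph V) (p : ℝ) (x y z w : V) : ℝ :=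
  (if z = x ∧ w = y then p - (1 - p) / deg G x else 0) +
    (if z = y ∧ w = y then (1 - p) / deg G x else 0) +
    (if z ∈ nearSet G x y ∧ w = z then (1 - p) / deg G y else 0) +
    (if z ∈ nearSet G x y ∧ w ∈ farSet G x y then (1 - p) / (deg G x * deg G y) else 0)

lemma transportPlan_nonneg (hp : (1 - p) / deg G x ≤ p) (hp₁ : p ≤ 1) (z w : V) :
    0 ≤ transportPlan G p x y z w := by
  rw [← sub_nonneg] at hp hp₁
  unfold transportPlan
  positivity

lemma sum_transportPlan_right (hxy : G.Adj x y)
    (hsub : ∀ z, G.Adj x z → z ≠ y → G.Adj y z) (z : V) :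
    ∑ w, transportPlan G p x y z w = mu G p x z := by
  have dx_pos : (0 : ℝ) < deg G x := mod_cast deg_pos_of_adj hxy
  have dy_pos : (0 : ℝ) < deg G y := mod_cast deg_pos_of_adj hxy.symm
  have card_far : (deg G x : ℝ) + #(farSet G x y) = deg G y :=
    mod_cast deg_add_card_farSet hxy hsub
  have near_mass : (1 - p) / deg G y + #(farSet G x y) * ((1 - p) / (deg G x * deg G y)) =
      (1 - p) / deg G x := by
    rw [eq_sub_of_add_eq' card_far]
    field_simp
    ring
  rw [mu_left_eq_sum_ite hxy]
  simp only [transportPlan, ite_and, sum_add_distrib, sum_ite_irrel, sum_ite_eq', mem_univ, if_true,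
    sum_const_zero, sum_ite_mem, univ_inter, sum_const, nsmul_eq_mul]
  split_ifs <;> linarith

lemma sum_transportPlan_left (hxy : G.Adj x y)
    (hsub : ∀ z, G.Adj x z → z ≠ y → G.Adj y z) (w : V) :
    ∑ z, transportPlan G p x y z w = mu G p y w := by
  have dx_pos : (0 : ℝ) < deg G x := mod_cast deg_pos_of_adj hxy
  have far_mass : deg G x * ((1 - p) / (deg G x * deg G y)) = (1 - p) / deg G y := by field_simp
  rw [mu_right_eq_sum_ite hxy hsub]
  simp only [transportPlan, ite_and, sum_add_distrib, sum_ite_irrel, sum_ite_eq, sum_ite_eq',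
    mem_univ, if_true, sum_const_zero, sum_ite_mem, univ_inter, sum_const, nsmul_eq_mul,
    card_nearSet hxy, far_mass]
  split_ifs <;> linarith

lemma isCoupling_transportPlan (hxy : G.Adj x y) (hsub : ∀ z, G.Adj x z → z ≠ y → G.Adj y z)
    (hp : (1 - p) / deg G x ≤ p) (hp₁ : p ≤ 1) :
    IsCoupling (mu G p x) (mu G p y) (transportPlan G p x y) :=
  ⟨transportPlan_nonneg hp hp₁, sum_transportPlan_right hxy hsub, sum_transportPlan_left hxy hsub⟩

lemma transportPlan_support {z w : V} (h : transportPlan G p x y z w ≠ 0) :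
    z = x ∧ w = y ∨ z = w ∨ z ∈ nearSet G x y ∧ w ∈ farSet G x y := by
  unfold transportPlan at h
  grind

lemma transportPotential_sub_eq_dist_of_ne_zero (hG : G.Connected) (hxy : G.Adj x y)
    (hjoin : ∀ z, G.Adj x z → ∀ w ∈ farSet G x y, G.Adj z w) (z w : V)
    (hzw : transportPlan G p x y z w ≠ 0) :
    transportPotential G x y z - transportPotential G x y w = G.dist z w := by
  have dist_far : ∀ w ∈ farSet G x y, G.dist x w = 2 := fun w hw => by
    obtain ⟨hyw, hwx, hxw⟩ := mem_farSet.1 hw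
    refine le_antisymm (SimpleGraph.dist_le (.cons hxy (.cons hyw .nil))) ?_
    exact hG.one_lt_dist_of_ne_of_not_adj hwx.symm hxw
  rcases transportPlan_support hzw with ⟨rfl, rfl⟩ | rfl | ⟨hz, hw⟩
  · simp [transportPotential, mem_farSet, hxy.ne', hxy, SimpleGraph.dist_eq_one_iff_adj.2 hxy]
  · simp
  · have hwx := (mem_farSet.1 hw).2.1
    rcases (mem_nearSet.1 hz).2 with rfl | hxz
    · norm_num [transportPotential, hw, hwx, dist_far w hw, mem_farSet]
    · simp [transportPotential, hw, hwx, hxz, hxz.ne', mem_farSet,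
        SimpleGraph.dist_eq_one_iff_adj.2 (hjoin z hxz w hw)]

lemma W1_mu_eq (hG : G.Connected) (hxy : G.Adj x y)
    (hsub : ∀ z, G.Adj x z → z ≠ y → G.Adj y z)
    (hjoin : ∀ z, G.Adj x z → ∀ w ∈ farSet G x y, G.Adj z w)
    (hp : (1 - p) / deg G x ≤ p) (hp₁ : p ≤ 1) :
    W1 G (mu G p x) (mu G p y) = 1 - (deg G x + 1) / deg G y * (1 - p) := by
  have hp₀ : 0 ≤ p := (div_nonneg (sub_nonneg.2 hp₁) (Nat.cast_nonneg _)).trans hp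
  have dy_pos : (0 : ℝ) < deg G y := mod_cast deg_pos_of_adj hxy.symm
  have card_far : (deg G x : ℝ) + #(farSet G x y) = deg G y :=
    mod_cast deg_add_card_farSet hxy hsub
  rw [W1_eq_of_isCoupling_of_potential (mu_le_one hp₀ hp₁)
    (isCoupling_transportPlan hxy hsub hp hp₁) (transportPotential_sub_le_dist hG)
    (transportPotential_sub_eq_dist_of_ne_zero hG hxy hjoin),
    sum_transportPotential_mul_sub hxy, eq_sub_of_add_eq' card_far]
  field_simp
  ring

theorem kappaLLY_eq_deg_add_one_div_deg (hG : G.Connected) (hxy : G.Adj x y)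
    (hsub : ∀ z, G.Adj x z → z ≠ y → G.Adj y z)
    (hjoin : ∀ z, G.Adj x z → ∀ w ∈ farSet G x y, G.Adj z w) :
    kappaLLY G x y = (deg G x + 1) / deg G y := by
  refine kappaLLY_eq_of_eventually_kappa_eq ?_
  filter_upwards [Ioo_mem_nhdsLT (by norm_num : (1 / 2 : ℝ) < 1)] with p hp
  have excess_nonneg : (1 - p) / deg G x ≤ p :=
    (div_nat_le_self_of_nonnneg (sub_nonneg.2 hp.2.le) _).trans (by linarith [hp.1])
  rw [kappa, W1_mu_eq hG hxy hsub hjoin excess_nonneg hp.2.le, sub_sub_cancel]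

lemma kappaLLY_eq_of_isCompleteMultipartite (hG : G.IsCompleteMultipartite)
    (hy : G.IsUniversal y) (hxy : x ≠ y) : kappaLLY G x y = (deg G x + 1) / deg G y := by
  refine kappaLLY_eq_deg_add_one_div_deg (.of_isUniversal hy) (hy hxy.symm).symm
    (fun z _ hzy => hy hzy.symm) fun z hxz w hw => ?_
  by_contra hzw
  exact hG.trans x w z (mem_farSet.1 hw).2.2 (mt .symm hzw) hxz

end Curvature

section Gab

variable {a b : ℕ} {u v : Fin (2 * a + b)}

lemma isCompleteMultipartite_Gab : (Gab a b).IsCompleteMultipartite := by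
  refine ⟨fun x y z hxy hyz => ?_⟩
  simp only [Gab, ne_eq, Fin.ext_iff] at *
  omega

lemma isUniversal_Gab (hv : 2 * a ≤ (v : ℕ)) : (Gab a b).IsUniversal v :=
  fun w hw => ⟨hw, fun h => by omega⟩

lemma existsUnique_ne_not_adj_Gab (hu : (u : ℕ) < 2 * a) :
    ∃! w, w ≠ u ∧ ¬ (Gab a b).Adj u w := by
  refine ⟨⟨if (u : ℕ) % 2 = 0 then u + 1 else u - 1, by grind⟩, ?_, fun w hw => ?_⟩
  · simp only [Gab, ne_eq, Fin.ext_iff]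
    grind
  · simp only [Gab, ne_eq, Fin.ext_iff] at *
    grind

lemma deg_add_one_eq_deg_Gab (hu : (u : ℕ) < 2 * a) (hv : 2 * a ≤ (v : ℕ)) :
    deg (Gab a b) u + 1 = deg (Gab a b) v := by
  have huv : (Gab a b).Adj u v := (isUniversal_Gab hv fun h => by omega).symm
  obtain ⟨w, hw, w_unique⟩ := existsUnique_ne_not_adj_Gab hu
  have far_eq : farSet (Gab a b) u v = {w} := by
    ext z
    rw [mem_farSet, mem_singleton]
    refine ⟨fun hz => w_unique z hz.2, ?_⟩
    rintro rfl
    exact ⟨isUniversal_Gab hv fun h => hw.2 (h ▸ huv), hw⟩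
  rw [← deg_add_card_farSet huv fun z _ hz => isUniversal_Gab hv hz.symm, far_eq, card_singleton]

lemma kappaLLY_Gab (hu : (u : ℕ) < 2 * a) (hv : 2 * a ≤ (v : ℕ)) : kappaLLY (Gab a b) u v = 1 := by
  rw [kappaLLY_eq_of_isCompleteMultipartite isCompleteMultipartite_Gab (isUniversal_Gab hv)
    fun h => by omega, ← deg_add_one_eq_deg_Gab hu hv, Nat.cast_add_one]
  exact div_self (Nat.cast_add_one_ne_zero _)

end Gab

/-- In `G(a,b)` with `a, b ≥ 1`, every edge `u_i ∼ v_j` has `κ_LLY = 1`. -/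
theorem stmt2 (a b : ℕ) (ha : 1 ≤ a) (hb : 1 ≤ b) (i j : ℕ)
    (hi1 : 1 ≤ i) (hi2 : i ≤ 2*a) (hj1 : 1 ≤ j) (hj2 : j ≤ b) :
    kappaLLY (Gab a b) ⟨i-1, by omega⟩ ⟨2*a+j-1, by omega⟩ = 1 :=
  kappaLLY_Gab (show i - 1 < 2 * a by omega) (show 2 * a ≤ 2 * a + j - 1 by omega)
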